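/- Let M be an acyclic matching on the graph G(C•) of the chain complex C•. Then g ∘ f is chain homotopic to the identity of C• via the homotopy χ: for every i ≥ 0 and every c ∈ X_i, (g_i ∘ f_i − id)(c) = (∂_{i+1} ∘ χ_i + χ_{i−1} ∘ ∂_i)(c). -/

import Mathlib

/-!
Algebraic Discrete Morse theory (Jöllenbeck–Welker).

Setup: `R` is a (possibly noncommutative) ring and `C` is a chain complex of free
left `R`-modules `C i = X i → R` with fixed finite basis `X i` in homological
degree `i`; the differential is `∂ i (c) = ∑ c', d i c c' • c'` (we record only the
matrix of coefficients `d`).  `M` is a matching on the associated weighted directed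
graph, `MStep` describes the edges of the modified graph `G_M`, `MPath` the directed
paths, `Gamma v w` the sum of the weights of all paths from `v` to `w`, `Crit` the
critical basis elements, `DMmap` the Morse differential, and `fmap`, `gmap`, `chimap`
the comparison maps and the homotopy.
-/

attribute [local instance] Classical.propDecidable

noncomputable section

section ADMT

variable {R : Type} [Ring R]
variable (X : ℕ → Type) [∀ i, Fintype (X i)]
variable (d : ∀ i, X (i + 1) → X i → R)
variable (M : ∀ i, Set (X (i + 1) × X i))

/-- The family of coefficients `d` of the differentials satisfies `∂ ∘ ∂ = 0`,
i.e. `C` is a chain complex. -/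
def IsComplexAux : Prop :=
  ∀ (i : ℕ) (c : X (i + 2)) (c'' : X i),
    ∑ c' : X (i + 1), d (i + 1) c c' * d i c' c'' = 0

/-- The edges of the modified graph `G_M`: downward steps along non-matched edges
of the graph `G(C)` (weight `d i c c'`), and upward reversed steps along matched
edges (weight `-(d i c c')⁻¹`). -/
inductive MStep : (Σ i, X i) → (Σ i, X i) → Prop
  | down (i : ℕ) (c : X (i + 1)) (c' : X i) (hne : d i c c' ≠ 0)
      (hnm : (c, c') ∉ M i) : MStep ⟨i + 1, c⟩ ⟨i, c'⟩
  | up (i : ℕ) (c : X (i + 1)) (c' : X i) (hmem : (c, c') ∈ M i) :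
      MStep ⟨i, c'⟩ ⟨i + 1, c⟩

/-- `M` is an acyclic matching: all edges of `M` are edges of the graph `G(C)`,
every vertex lies in at most one edge of `M`, the weights of matched edges are
central units of `R`, and the modified graph `G_M` has no directed cycle. -/
def IsAcyclicMatching : Prop :=
  (∀ (i : ℕ) (c : X (i + 1)) (c' : X i), (c, c') ∈ M i → d i c c' ≠ 0) ∧
  (∀ (i : ℕ) (c : X (i + 1)) (c₁ c₂ : X i), (c, c₁) ∈ M i → (c, c₂) ∈ M i → c₁ = c₂) ∧
  (∀ (i : ℕ) (c₁ c₂ : X (i + 1)) (c' : X i), (c₁, c') ∈ M i → (c₂, c') ∈ M i → c₁ = c₂) ∧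
  (∀ (i : ℕ) (a : X (i + 2)) (b : X (i + 1)) (c : X i),
      (a, b) ∈ M (i + 1) → (b, c) ∈ M i → False) ∧
  (∀ (i : ℕ) (c : X (i + 1)) (c' : X i), (c, c') ∈ M i →
      d i c c' ∈ Set.center R ∧ IsUnit (d i c c')) ∧
  (∀ v : Σ i, X i, ¬ Relation.TransGen (MStep X d M) v v)

/-- Directed paths in the modified graph `G_M`. -/
inductive MPath : (Σ i, X i) → (Σ i, X i) → Type
  | nil (v : Σ i, X i) : MPath v v
  | down (i : ℕ) (c : X (i + 1)) (c' : X i) (hne : d i c c' ≠ 0)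
      (hnm : (c, c') ∉ M i) (w : Σ i, X i) (p : MPath ⟨i, c'⟩ w) :
      MPath ⟨i + 1, c⟩ w
  | up (i : ℕ) (c : X (i + 1)) (c' : X i) (hmem : (c, c') ∈ M i)
      (w : Σ i, X i) (p : MPath ⟨i + 1, c⟩ w) : MPath ⟨i, c'⟩ w

/-- The weight of a path: the product of the weights of its edges.  A non-matched
edge `c → c'` has weight `d i c c'`; a reversed matched edge has weight
`-(d i c c')⁻¹`. -/
def MPath.weight : ∀ {v w : Σ i, X i}, MPath X d M v w → R
  | _, _, .nil _ => 1
  | _, _, .down i c c' _ _ _ p => d i c c' * MPath.weight p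
  | _, _, .up i c c' _ _ p => -(Ring.inverse (d i c c')) * MPath.weight p

/-- The first step of the path decreases the homological degree. -/
def MPath.firstDown : ∀ {v w : Σ i, X i}, MPath X d M v w → Prop
  | _, _, .nil _ => False
  | _, _, .down _ _ _ _ _ _ _ => True
  | _, _, .up _ _ _ _ _ _ => False

/-- The first step of the path increases the homological degree. -/
def MPath.firstUp : ∀ {v w : Σ i, X i}, MPath X d M v w → Prop
  | _, _, .nil _ => False
  | _, _, .down _ _ _ _ _ _ _ => False
  | _, _, .up _ _ _ _ _ _ => True

/-- `Γ(v,w)`: the sum of the weights of all directed paths from `v` to `w` in `G_M`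
(under the acyclicity hypothesis there are only finitely many such paths). -/
def Gamma (v w : Σ i, X i) : R := ∑ᶠ p : MPath X d M v w, MPath.weight X d M p

/-- `Γ↓(v,w)`: the sum of the weights of all paths from `v` to `w` whose first step
decreases the homological degree. -/
def GammaDown (v w : Σ i, X i) : R :=
  ∑ᶠ (p : MPath X d M v w) (_ : MPath.firstDown X d M p), MPath.weight X d M p

/-- `Γ↑(v,w)`: the sum of the weights of all paths from `v` to `w` whose first step
increases the homological degree. -/
def GammaUp (v w : Σ i, X i) : R :=
  ∑ᶠ (p : MPath X d M v w) (_ : MPath.firstUp X d M p), MPath.weight X d M p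

/-- A basis element is critical if it lies in no edge of `M`. -/
def CriticalV (v : Σ i, X i) : Prop :=
  ∀ (j : ℕ) (a : X (j + 1)) (b : X j), (a, b) ∈ M j →
    v ≠ ⟨j + 1, a⟩ ∧ v ≠ ⟨j, b⟩

/-- The critical basis elements of homological degree `i`. -/
abbrev Crit (i : ℕ) := {c : X i // CriticalV X M ⟨i, c⟩}

/-- The `R`-linear map between free left `R`-modules determined by a matrix of
coefficients. -/
def liftMap {α β : Type} [Fintype α] (w : α → β → R) :
    (α → R) →ₗ[R] (β → R) where
  toFun v b := ∑ a, v a * w a b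
  map_add' u v := by
    funext b
    simp [add_mul, Finset.sum_add_distrib]
  map_smul' r v := by
    funext b
    simp [Finset.mul_sum, mul_assoc]

/-- The differential `∂` of the original complex `C`. -/
def Dmap (i : ℕ) : (X (i + 1) → R) →ₗ[R] (X i → R) :=
  liftMap (fun c c' => d i c c')

/-- The Morse differential `∂^M (c) = ∑ Γ(c,c') • c'` on the critical cells. -/
def DMmap (i : ℕ) : (Crit X M (i + 1) → R) →ₗ[R] (Crit X M i → R) :=
  liftMap (fun c c' => Gamma X d M ⟨i + 1, c.1⟩ ⟨i, c'.1⟩)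

/-- The comparison map `f : C → C^M`, `f(c) = ∑ Γ(c,c') • c'`. -/
def fmap (i : ℕ) : (X i → R) →ₗ[R] (Crit X M i → R) :=
  liftMap (fun c c' => Gamma X d M ⟨i, c⟩ ⟨i, c'.1⟩)

/-- The comparison map `g : C^M → C`, `g(c) = ∑ Γ(c,c') • c'`. -/
def gmap (i : ℕ) : (Crit X M i → R) →ₗ[R] (X i → R) :=
  liftMap (fun c c' => Gamma X d M ⟨i, c.1⟩ ⟨i, c'⟩)

/-- The homotopy `χ : C_i → C_{i+1}`, `χ(c) = ∑ Γ(c,c') • c'`. -/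
def chimap (i : ℕ) : (X i → R) →ₗ[R] (X (i + 1) → R) :=
  liftMap (fun c c' => Gamma X d M ⟨i, c⟩ ⟨i + 1, c'⟩)

/-!
As `G_M` is acyclic and its paths stay in finitely many degrees, a matched edge `(a, c)` can be used
to eliminate the lower end `c`: up to a unit, `c` is `∂ a` minus terms that `c` reaches in `G_M`.
Hence `C i` is spanned by the basis elements that are not lower ends together with the boundaries
`∂ a` of upper ends, and the homotopy relation only has to be checked on these. Splitting off the
first edge of a path gives `f (∂ a) = 0` and `χ (∂ a) = -a` for an upper end `a`. On elements that
are not lower ends `χ` vanishes, while `f` kills the upper ends and fixes the critical elements `c`,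
for which `g c = c + χ (∂ c)`.
-/

/-- Acyclic matchings whose matched weights are units of `R`, not necessarily central. -/
structure IsAcyclicUnitMatching : Prop where
  lower_unique : ∀ {i : ℕ} {a : X (i + 1)} {c c' : X i}, (a, c) ∈ M i → (a, c') ∈ M i → c = c'
  upper_unique : ∀ {i : ℕ} {a a' : X (i + 1)} {c : X i}, (a, c) ∈ M i → (a', c) ∈ M i → a = a'
  notMem_of_mem : ∀ {i : ℕ} {a : X (i + 2)} {b : X (i + 1)} {c : X i},
    (a, b) ∈ M (i + 1) → (b, c) ∉ M i
  isUnit : ∀ {i : ℕ} {a : X (i + 1)} {c : X i}, (a, c) ∈ M i → IsUnit (d i a c)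
  acyclic : ∀ v : Σ i, X i, ¬ Relation.TransGen (MStep X d M) v v

section

variable {X d M}

section Graph

omit [∀ i, Fintype (X i)]

theorem IsAcyclicMatching.isAcyclicUnitMatching (hM : IsAcyclicMatching X d M) :
    IsAcyclicUnitMatching X d M := by
  obtain ⟨-, hlower, hupper, hdisjoint, hweight, hacyclic⟩ := hM
  exact ⟨hlower _ _ _ _, hupper _ _ _ _, hdisjoint _ _ _ _, fun h ↦ (hweight _ _ _ h).2, hacyclic⟩

variable (M) in
/-- The vertex is the lower end `c` of a matched edge `(a, c)`. -/
inductive IsLower : (Σ i, X i) → Prop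
  | intro {i : ℕ} {a : X (i + 1)} {c : X i} (h : (a, c) ∈ M i) : IsLower ⟨i, c⟩

variable (M) in
/-- The vertex is the upper end `a` of a matched edge `(a, c)`. -/
inductive IsUpper : (Σ i, X i) → Prop
  | intro {i : ℕ} {a : X (i + 1)} {c : X i} (h : (a, c) ∈ M i) : IsUpper ⟨i + 1, a⟩

theorem criticalV_iff {v : Σ i, X i} : CriticalV X M v ↔ ¬ IsLower M v ∧ ¬ IsUpper M v := by
  constructor
  · intro h
    exact ⟨fun ⟨hac⟩ ↦ (h _ _ _ hac).2 rfl, fun ⟨hac⟩ ↦ (h _ _ _ hac).1 rfl⟩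
  · rintro ⟨hlower, hupper⟩ i a c hac
    exact ⟨fun h ↦ hupper (h ▸ ⟨hac⟩), fun h ↦ hlower (h ▸ ⟨hac⟩)⟩

theorem IsUpper.not_isLower (hM : IsAcyclicUnitMatching X d M) {v : Σ i, X i}
    (hv : IsUpper M v) : ¬ IsLower M v := by
  obtain ⟨hac⟩ := hv
  rintro ⟨hba⟩
  exact hM.notMem_of_mem hba hac

variable (M) in
/-- The degree of the upper end of the matched edge through `v`, or of `v` itself if there is none
(or `v` is that upper end). It never increases along `G_M`. -/
def topDegree (v : Σ i, X i) : ℕ := if IsLower M v then v.1 + 1 else v.1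

variable (M) in
/-- The degree of the lower end of the matched edge through `v`, or of `v` itself if there is none
(or `v` is that lower end). It never increases along `G_M`. -/
def bottomDegree (v : Σ i, X i) : ℕ := if IsUpper M v then v.1 - 1 else v.1

theorem MStep.topDegree_le (hM : IsAcyclicUnitMatching X d M) {v w : Σ i, X i}
    (h : MStep X d M v w) : topDegree M w ≤ topDegree M v := by
  cases h with
  | down i a c _ _ => unfold topDegree; split_ifs <;> dsimp only <;> omega
  | up i a c hac =>
    have hupper : IsUpper M ⟨i + 1, a⟩ := ⟨hac⟩
    have hlower : IsLower M ⟨i, c⟩ := ⟨hac⟩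
    simp [topDegree, hupper.not_isLower hM, hlower]

theorem MStep.bottomDegree_le (hM : IsAcyclicUnitMatching X d M) {v w : Σ i, X i}
    (h : MStep X d M v w) : bottomDegree M w ≤ bottomDegree M v := by
  cases h with
  | down i a c _ _ => unfold bottomDegree; split_ifs <;> dsimp only <;> omega
  | up i a c hac =>
    have hupper : IsUpper M ⟨i + 1, a⟩ := ⟨hac⟩
    have hnot : ¬ IsUpper M ⟨i, c⟩ := fun h ↦ h.not_isLower hM ⟨hac⟩
    simp [bottomDegree, hupper, hnot]

variable (X d M) in
/-- There is a directed path from `v` to `w` in `G_M`. -/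
def Reaches (v w : Σ i, X i) : Prop := Relation.ReflTransGen (MStep X d M) v w

theorem MPath.reaches {v w : Σ i, X i} (p : MPath X d M v w) : Reaches X d M v w := by
  induction p with
  | nil v => exact .refl
  | down i a c hne hnot w _ ih => exact ih.head (.down i a c hne hnot)
  | up i a c hac w _ ih => exact ih.head (.up i a c hac)

theorem Reaches.topDegree_le (hM : IsAcyclicUnitMatching X d M) {v w : Σ i, X i}
    (h : Reaches X d M v w) : topDegree M w ≤ topDegree M v := by
  induction h with
  | refl => exact le_rfl
  | tail _ hstep ih => exact (hstep.topDegree_le hM).trans ih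

theorem Reaches.bottomDegree_le (hM : IsAcyclicUnitMatching X d M) {v w : Σ i, X i}
    (h : Reaches X d M v w) : bottomDegree M w ≤ bottomDegree M v := by
  induction h with
  | refl => exact le_rfl
  | tail _ hstep ih => exact (hstep.bottomDegree_le hM).trans ih

theorem Reaches.degree_le_succ (hM : IsAcyclicUnitMatching X d M) {v w : Σ i, X i}
    (h : Reaches X d M v w) : w.1 ≤ v.1 + 1 := by
  have := h.topDegree_le hM
  unfold topDegree at this
  split_ifs at this <;> omega

theorem Reaches.degree_le_of_not_isLower (hM : IsAcyclicUnitMatching X d M) {v w : Σ i, X i}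
    (h : Reaches X d M v w) (hv : ¬ IsLower M v) : w.1 ≤ v.1 := by
  have := h.topDegree_le hM
  unfold topDegree at this
  split_ifs at this <;> omega

theorem Reaches.degree_le_of_not_isUpper (hM : IsAcyclicUnitMatching X d M) {v w : Σ i, X i}
    (h : Reaches X d M v w) (hw : ¬ IsUpper M w) : w.1 ≤ v.1 := by
  have := h.bottomDegree_le hM
  unfold bottomDegree at this
  split_ifs at this <;> omega

theorem finite_setOf_reaches [∀ i, Finite (X i)] (hM : IsAcyclicUnitMatching X d M)
    (v : Σ i, X i) : {w | Reaches X d M v w}.Finite := by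
  have hfiber (i : ℕ) : (Sigma.fst ⁻¹' {i} : Set (Σ i, X i)).Finite :=
    Set.range_sigmaMk (α := X) i ▸ Set.finite_range _
  exact ((Set.finite_Iic (v.1 + 1)).preimage' fun i _ ↦ hfiber i).subset
    fun w hw ↦ hw.degree_le_succ hM

theorem wellFounded_swap_mStep [∀ i, Finite (X i)] (hM : IsAcyclicUnitMatching X d M) :
    WellFounded (Function.swap (MStep X d M)) := by
  refine ⟨fun v ↦ (Set.WellFoundedOn.acc_iff_wellFoundedOn.out 0 1).2 ?_⟩
  have : IsStrictOrder _ (Relation.TransGen (Function.swap (MStep X d M))) :=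
    { irrefl := fun v hv ↦ hM.acyclic v (Relation.transGen_swap.1 hv) }
  have hfinite : {w | Relation.ReflTransGen (Function.swap (MStep X d M)) w v}.Finite :=
    (finite_setOf_reaches hM v).subset fun w hw ↦ Relation.reflTransGen_swap.1 hw
  exact (hfinite.wellFoundedOn (r := Relation.TransGen (Function.swap (MStep X d M)))).mono
    (fun _ _ h ↦ Relation.TransGen.single h) subset_rfl

/-- Splits off the first edge of a path; `none` is the value on the trivial path. -/
def MPath.uncons : ∀ {v w : Σ i, X i}, MPath X d M v w →
    Option (Σ z : {z // MStep X d M v z}, MPath X d M z w)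
  | _, _, .nil _ => none
  | _, _, .down i a c hne hnot _ p => some ⟨⟨_, .down i a c hne hnot⟩, p⟩
  | _, _, .up i a c hac _ p => some ⟨⟨_, .up i a c hac⟩, p⟩

theorem MPath.uncons_injective {v w : Σ i, X i} :
    Function.Injective (MPath.uncons (X := X) (d := d) (M := M) (v := v) (w := w)) := by
  intro p q h
  cases p <;> cases q <;> simp_all [MPath.uncons] <;> omega

theorem finite_mPath [∀ i, Finite (X i)] (hM : IsAcyclicUnitMatching X d M) (v w : Σ i, X i) :
    Finite (MPath X d M v w) := by
  induction v using (wellFounded_swap_mStep hM).induction with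
  | _ v ih =>
    have : Finite {z // MStep X d M v z} :=
      (finite_setOf_reaches hM v).subset fun z hz ↦ .single hz
    have (z : {z // MStep X d M v z}) : Finite (MPath X d M z w) := ih z z.2
    exact .of_injective _ MPath.uncons_injective

theorem single_lower_mem_of_boundary_mem {i : ℕ} [Finite (X i)]
    (hM : IsAcyclicUnitMatching X d M) {a : X (i + 1)} {c : X i} (hac : (a, c) ∈ M i)
    {S : Submodule R (X i → R)} (ha : d i a ∈ S)
    (hS : ∀ b, MStep X d M ⟨i + 1, a⟩ ⟨i, b⟩ → Pi.single b 1 ∈ S) : Pi.single c 1 ∈ S := by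
  let _ := Fintype.ofFinite (X i)
  have hrest : ∑ b ∈ Finset.univ.erase c, d i a b • (Pi.single b 1 : X i → R) ∈ S := by
    refine S.sum_mem fun b hb ↦ ?_
    by_cases hab : d i a b = 0
    · simp [hab]
    have hnot : (a, b) ∉ M i := fun h ↦ Finset.ne_of_mem_erase hb (hM.lower_unique h hac)
    exact S.smul_mem _ (hS b (.down i a b hab hnot))
  have hexpand : d i a c • Pi.single c 1 +
      ∑ b ∈ Finset.univ.erase c, d i a b • (Pi.single b 1 : X i → R) = d i a := by
    rw [Finset.add_sum_erase _ (fun b ↦ d i a b • (Pi.single b 1 : X i → R)) (Finset.mem_univ c),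
      ← pi_eq_sum_univ']
  rw [← hexpand, S.add_mem_iff_left hrest] at ha
  exact (S.smul_mem_iff_of_isUnit (hM.isUnit hac)).1 ha

theorem span_single_union_boundary [∀ i, Finite (X i)] (hM : IsAcyclicUnitMatching X d M)
    (i : ℕ) :
    Submodule.span R ((fun c ↦ Pi.single c 1) '' {c : X i | ¬ IsLower M ⟨i, c⟩} ∪
      d i '' {a | IsUpper M ⟨i + 1, a⟩}) = ⊤ := by
  set S := Submodule.span R ((fun c ↦ Pi.single c 1) '' {c : X i | ¬ IsLower M ⟨i, c⟩} ∪
    d i '' {a | IsUpper M ⟨i + 1, a⟩})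
  suffices h : ∀ c : X i, Pi.single c 1 ∈ S by
    rw [eq_top_iff, ← (Pi.basisFun R (X i)).span_eq, Submodule.span_le]
    rintro _ ⟨c, rfl⟩
    simpa using h c
  intro c
  induction c using (InvImage.wf (Sigma.mk i) (wellFounded_swap_mStep hM).transGen).induction with
  | _ c ih =>
    by_cases hc : IsLower M ⟨i, c⟩
    · cases hc with
      | @intro _ a _ hac =>
        have hboundary : d i a ∈ S := Submodule.subset_span (.inr ⟨a, ⟨hac⟩, rfl⟩)
        exact single_lower_mem_of_boundary_mem hM hac hboundary fun b hab ↦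
          ih b (.head hab (.single (.up i a c hac)))
    · exact Submodule.subset_span (.inl ⟨c, hc, rfl⟩)

theorem Gamma_eq_zero_of_not_reaches {v w : Σ i, X i} (h : ¬ Reaches X d M v w) :
    Gamma X d M v w = 0 := by
  have : IsEmpty (MPath X d M v w) := ⟨fun p ↦ h p.reaches⟩
  exact finsum_of_isEmpty _

theorem Gamma_eq_ite_of_forall_not_reaches {v w : Σ i, X i}
    (h : ∀ z, MStep X d M v z → ¬ Reaches X d M z w) :
    Gamma X d M v w = if v = w then 1 else 0 := by
  have huncons (p : MPath X d M v w) : p.uncons = none :=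
    Option.eq_none_iff_forall_ne_some.2 fun z _ ↦ h z.1 z.1.2 z.2.reaches
  split_ifs with hvw
  · subst hvw
    let _ : Unique (MPath X d M v v) :=
      ⟨⟨.nil v⟩, fun p ↦ MPath.uncons_injective (huncons p)⟩
    exact finsum_unique _
  · refine Gamma_eq_zero_of_not_reaches fun hreach ↦ ?_
    obtain rfl | ⟨z, hz, hzw⟩ := hreach.cases_head
    exacts [hvw rfl, h z hz hzw]

theorem Gamma_eq_of_mem [∀ i, Finite (X i)] (hM : IsAcyclicUnitMatching X d M) {i : ℕ}
    {a : X (i + 1)} {c : X i} (hac : (a, c) ∈ M i) {w : Σ i, X i} (hi : i ≤ w.1)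
    (hw : w.1 = i → CriticalV X M w) :
    Gamma X d M ⟨i, c⟩ w = -Ring.inverse (d i a c) * Gamma X d M ⟨i + 1, a⟩ w := by
  have := finite_mPath hM ⟨i + 1, a⟩ w
  have hbij : Function.Bijective (MPath.up (d := d) i a c hac w) := by
    refine ⟨fun p q h ↦ by simpa using h, fun p ↦ ?_⟩
    cases p with
    | nil => exact absurd ⟨hac⟩ (criticalV_iff.1 (hw rfl)).1
    | down j _ b _ _ _ p =>
      exfalso
      by_cases hdeg : w.1 = j + 1
      · have := p.reaches.degree_le_of_not_isUpper hM (criticalV_iff.1 (hw hdeg)).2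
        dsimp only at this
        omega
      · have := p.reaches.degree_le_succ hM
        dsimp only at this
        omega
    | up _ a' _ hac' _ p =>
      obtain rfl := hM.upper_unique hac hac'
      exact ⟨p, rfl⟩
  rw [Gamma, Gamma, mul_finsum' _ _ (Set.toFinite _)]
  exact (finsum_eq_of_bijective _ hbij fun p ↦ rfl).symm

/-- Paths starting at a vertex `c` of positive degree that is no lower end, according to their first
edge; the left summand holds the trivial path. -/
def MPath.equivOfNotIsLower {i : ℕ} {c : X (i + 1)} (hc : ¬ IsLower M ⟨i + 1, c⟩) (w : Σ i, X i) :
    MPath X d M ⟨i + 1, c⟩ w ≃ PLift ((⟨i + 1, c⟩ : Σ i, X i) = w) ⊕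
      Σ b : {b : X i // (c, b) ∉ M i ∧ d i c b ≠ 0}, MPath X d M ⟨i, b⟩ w where
  toFun
    | .nil _ => .inl ⟨rfl⟩
    | .down _ _ b hne hnot _ p => .inr ⟨⟨b, hnot, hne⟩, p⟩
    | .up _ _ _ hac _ _ => (hc ⟨hac⟩).elim
  invFun
    | .inl h => h.down ▸ .nil _
    | .inr ⟨b, p⟩ => .down i c b b.2.2 b.2.1 w p
  left_inv p := by
    cases p with
    | up _ _ _ hac _ _ => exact (hc ⟨hac⟩).elim
    | _ => rfl
  right_inv := by rintro (⟨⟨rfl⟩⟩ | _) <;> rfl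

end Graph

theorem Gamma_eq_of_not_isLower (hM : IsAcyclicUnitMatching X d M) {i : ℕ} {c : X (i + 1)}
    (hc : ¬ IsLower M ⟨i + 1, c⟩) (w : Σ i, X i) :
    Gamma X d M ⟨i + 1, c⟩ w = (if (⟨i + 1, c⟩ : Σ i, X i) = w then 1 else 0) +
      ∑ b with (c, b) ∉ M i, d i c b * Gamma X d M ⟨i, b⟩ w := by
  have := finite_mPath hM
  let _ (v : Σ i, X i) : Fintype (MPath X d M v w) := .ofFinite _
  have hnil : ∑ h, MPath.weight X d M ((MPath.equivOfNotIsLower hc w).symm (.inl h)) =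
      if (⟨i + 1, c⟩ : Σ i, X i) = w then 1 else 0 := by
    split_ifs with h
    · subst h
      exact Fintype.sum_subsingleton _ (PLift.up rfl)
    · exact Finset.sum_eq_zero fun h' _ ↦ absurd h'.down h
  have hdown : ∑ b with (c, b) ∉ M i, d i c b * Gamma X d M ⟨i, b⟩ w =
      ∑ b : {b // (c, b) ∉ M i ∧ d i c b ≠ 0}, d i c b * Gamma X d M ⟨i, b⟩ w := by
    rw [← Finset.sum_subtype ({b | (c, b) ∉ M i ∧ d i c b ≠ 0} : Finset (X i)) (by simp)
      (fun b ↦ d i c b * Gamma X d M ⟨i, b⟩ w), ← Finset.filter_filter]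
    exact (Finset.sum_filter_of_ne fun b _ hb ↦ left_ne_zero_of_mul hb).symm
  rw [hdown, Gamma, finsum_eq_sum_of_fintype, ← (MPath.equivOfNotIsLower hc w).symm.sum_comp,
    Fintype.sum_sum_type, Fintype.sum_sigma, hnil]
  simp only [Gamma, finsum_eq_sum_of_fintype, Finset.mul_sum]
  rfl

theorem sum_boundary_mul_Gamma (hM : IsAcyclicUnitMatching X d M) {i : ℕ} {a : X (i + 1)}
    (ha : IsUpper M ⟨i + 1, a⟩) {w : Σ i, X i} (hi : i ≤ w.1) (hw : w.1 = i → CriticalV X M w) :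
    ∑ b, d i a b * Gamma X d M ⟨i, b⟩ w = -if (⟨i + 1, a⟩ : Σ i, X i) = w then 1 else 0 := by
  have hlower := ha.not_isLower hM
  cases ha with
  | @intro _ _ c hac =>
    have hmatched : ({b | (a, b) ∈ M i} : Finset (X i)) = {c} := by
      ext b
      simpa using ⟨fun hab ↦ hM.lower_unique hab hac, fun h ↦ h ▸ hac⟩
    rw [← Finset.sum_filter_add_sum_filter_not _ (fun b ↦ (a, b) ∈ M i), hmatched,
      Finset.sum_singleton, Gamma_eq_of_mem hM hac hi hw, neg_mul, mul_neg,
      Ring.mul_inverse_cancel_left _ _ (hM.isUnit hac), Gamma_eq_of_not_isLower hM hlower w]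
    abel

theorem Gamma_eq_of_criticalV (hM : IsAcyclicUnitMatching X d M) {i : ℕ} {c : X (i + 1)}
    (hc : CriticalV X M ⟨i + 1, c⟩) (w : Σ i, X i) :
    Gamma X d M ⟨i + 1, c⟩ w = (if (⟨i + 1, c⟩ : Σ i, X i) = w then 1 else 0) +
      ∑ b, d i c b * Gamma X d M ⟨i, b⟩ w := by
  obtain ⟨hlower, hupper⟩ := criticalV_iff.1 hc
  have hunmatched (b : X i) : (c, b) ∉ M i := fun hcb ↦ hupper ⟨hcb⟩
  simp [Gamma_eq_of_not_isLower hM hlower, hunmatched]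

theorem liftMap_single {α β : Type} [Fintype α] [DecidableEq α] (w : α → β → R) (a : α) :
    liftMap w (Pi.single a 1) = w a := by
  ext b
  simp [liftMap, Pi.single_apply]

theorem Dmap_single {i : ℕ} (c : X (i + 1)) : Dmap X d i (Pi.single c 1) = d i c :=
  liftMap_single _ c

theorem Dmap_boundary (hC : IsComplexAux X d) {i : ℕ} (a : X (i + 2)) :
    Dmap X d i (d (i + 1) a) = 0 :=
  funext (hC i a)

theorem fmap_single_of_not_isLower (hM : IsAcyclicUnitMatching X d M) {i : ℕ} {c : X i}
    (hc : ¬ IsLower M ⟨i, c⟩) (k : Crit X M i) :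
    fmap X d M i (Pi.single c 1) k = if c = k then 1 else 0 := by
  rw [fmap, liftMap_single, Gamma_eq_ite_of_forall_not_reaches]
  · simp
  · rintro z (⟨j, _, b, -, -⟩ | ⟨_, _, _, hac⟩) hz
    · have := hz.degree_le_of_not_isUpper hM (criticalV_iff.1 k.2).2
      simp at this
    · exact hc ⟨hac⟩

theorem fmap_single_of_isUpper (hM : IsAcyclicUnitMatching X d M) {i : ℕ} {c : X i}
    (hc : IsUpper M ⟨i, c⟩) : fmap X d M i (Pi.single c 1) = 0 := by
  ext k
  rw [fmap_single_of_not_isLower hM (hc.not_isLower hM), if_neg, Pi.zero_apply]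
  rintro rfl
  exact (criticalV_iff.1 k.2).2 hc

theorem fmap_single_of_criticalV (hM : IsAcyclicUnitMatching X d M) {i : ℕ} (c : Crit X M i) :
    fmap X d M i (Pi.single c.1 1) = Pi.single c 1 := by
  ext k
  rw [fmap_single_of_not_isLower hM (criticalV_iff.1 c.2).1, Pi.single_apply]
  simp only [Subtype.ext_iff, eq_comm]

theorem fmap_boundary_of_isUpper (hM : IsAcyclicUnitMatching X d M) {i : ℕ} {a : X (i + 1)}
    (ha : IsUpper M ⟨i + 1, a⟩) : fmap X d M i (d i a) = 0 := by
  ext k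
  refine (sum_boundary_mul_Gamma hM ha le_rfl fun _ ↦ k.2).trans ?_
  simp

theorem chimap_single_of_not_isLower (hM : IsAcyclicUnitMatching X d M) {i : ℕ} {c : X i}
    (hc : ¬ IsLower M ⟨i, c⟩) : chimap X d M i (Pi.single c 1) = 0 := by
  ext x
  rw [chimap, liftMap_single]
  refine Gamma_eq_zero_of_not_reaches fun h ↦ ?_
  have := h.degree_le_of_not_isLower hM hc
  simp at this

theorem chimap_boundary_of_isUpper (hM : IsAcyclicUnitMatching X d M) {i : ℕ} {a : X (i + 1)}
    (ha : IsUpper M ⟨i + 1, a⟩) : chimap X d M i (d i a) = -Pi.single a 1 := by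
  ext x
  refine (sum_boundary_mul_Gamma hM ha (w := ⟨i + 1, x⟩) (by simp) (by simp)).trans ?_
  simp [Pi.single_apply, eq_comm]

variable (X d M) in
/-- The summand `χ_{i-1} ∘ ∂_i` of the homotopy relation, where `∂_0 = 0`. -/
def chiCompBoundary : ∀ i, (X i → R) →ₗ[R] (X i → R)
  | 0 => 0
  | i + 1 => chimap X d M i ∘ₗ Dmap X d i

theorem chiCompBoundary_boundary (hC : IsComplexAux X d) {i : ℕ} (a : X (i + 1)) :
    chiCompBoundary X d M i (d i a) = 0 := by
  cases i with
  | zero => rfl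
  | succ i => simp [chiCompBoundary, Dmap_boundary hC]

theorem chiCompBoundary_single_of_isUpper (hM : IsAcyclicUnitMatching X d M) {i : ℕ} {c : X i}
    (hc : IsUpper M ⟨i, c⟩) : chiCompBoundary X d M i (Pi.single c 1) = -Pi.single c 1 := by
  cases i with
  | zero => cases hc
  | succ i => simp [chiCompBoundary, Dmap_single, chimap_boundary_of_isUpper hM hc]

theorem gmap_single (hM : IsAcyclicUnitMatching X d M) {i : ℕ} (c : Crit X M i) :
    gmap X d M i (Pi.single c 1) =
      Pi.single c.1 1 + chiCompBoundary X d M i (Pi.single c.1 1) := by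
  ext e
  rw [gmap, liftMap_single, Pi.add_apply, Pi.single_apply]
  cases i with
  | zero =>
    rw [Gamma_eq_ite_of_forall_not_reaches]
    · simp [chiCompBoundary, eq_comm]
    · rintro z (_ | ⟨_, _, _, hac⟩)
      exact absurd ⟨hac⟩ (criticalV_iff.1 c.2).1
  | succ i =>
    rw [Gamma_eq_of_criticalV hM c.2]
    simp [chiCompBoundary, Dmap_single, chimap, liftMap, eq_comm]

theorem gmap_comp_fmap_sub_id (hC : IsComplexAux X d) (hM : IsAcyclicUnitMatching X d M) (i : ℕ) :
    gmap X d M i ∘ₗ fmap X d M i - LinearMap.id =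
      Dmap X d i ∘ₗ chimap X d M i + chiCompBoundary X d M i := by
  refine LinearMap.ext_on (span_single_union_boundary hM i) ?_
  rintro _ (⟨c, hlower, rfl⟩ | ⟨a, hupper, rfl⟩)
  · by_cases hupper : IsUpper M ⟨i, c⟩
    · simp [fmap_single_of_isUpper hM hupper, chimap_single_of_not_isLower hM hlower,
        chiCompBoundary_single_of_isUpper hM hupper]
    · have hcrit : CriticalV X M ⟨i, c⟩ := criticalV_iff.2 ⟨hlower, hupper⟩
      simp [fmap_single_of_criticalV hM ⟨c, hcrit⟩, gmap_single hM ⟨c, hcrit⟩,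
        chimap_single_of_not_isLower hM hlower]
  · simp [fmap_boundary_of_isUpper hM hupper, chimap_boundary_of_isUpper hM hupper,
      chiCompBoundary_boundary hC, Dmap_single]

end

theorem gmap_comp_fmap_homotopic_id_general
    (hC : IsComplexAux X d) (hM : IsAcyclicUnitMatching X d M) :
    (gmap X d M 0 ∘ₗ fmap X d M 0 - LinearMap.id = Dmap X d 0 ∘ₗ chimap X d M 0) ∧
    (∀ i, gmap X d M (i + 1) ∘ₗ fmap X d M (i + 1) - LinearMap.id =
        Dmap X d (i + 1) ∘ₗ chimap X d M (i + 1) + chimap X d M i ∘ₗ Dmap X d i) :=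
  ⟨(gmap_comp_fmap_sub_id hC hM 0).trans (add_zero _), fun i ↦ gmap_comp_fmap_sub_id hC hM (i + 1)⟩

/-- Lemma B.3 (H1).  If `M` is an acyclic matching on the graph
`G(C)` of the chain complex `C`, then `g ∘ f` is chain homotopic to the identity of
`C` via the homotopy `χ`: in degree `0` one has `g ∘ f - id = ∂_1 ∘ χ_0` (as `∂_0 = 0`),
and in degree `i + 1` one has `g ∘ f - id = ∂_{i+2} ∘ χ_{i+1} + χ_i ∘ ∂_{i+1}`. -/
theorem gmap_comp_fmap_homotopic_id
    (hC : IsComplexAux X d) (hM : IsAcyclicMatching X d M) :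
    (gmap X d M 0 ∘ₗ fmap X d M 0 - LinearMap.id = Dmap X d 0 ∘ₗ chimap X d M 0) ∧
    (∀ i, gmap X d M (i + 1) ∘ₗ fmap X d M (i + 1) - LinearMap.id =
        Dmap X d (i + 1) ∘ₗ chimap X d M (i + 1) + chimap X d M i ∘ₗ Dmap X d i) :=
  gmap_comp_fmap_homotopic_id_general X d M hC hM.isAcyclicUnitMatching

end ADMT

end
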